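/- Let W be a graphon, n ≥ 2 an integer, and G a simple graph on vertex set {1,…,n}. Then there exists a permutation π of {1,…,n} such that the relabelled graph G̃ (with i adjacent to j in G̃ iff π(i) adjacent to π(j) in G) satisfies d_□(W_{G̃}, W) ≤ δ_□(G,W) + 2·d_□(W, W̄_n) + 18/√(log₂ n). -/

import Mathlib

open MeasureTheory Set Filter

noncomputable section

/-- A graphon: a symmetric measurable function `ℝ → ℝ → ℝ` with values in `[0,1]`
(only its values on `[0,1]²` matter). -/
def IsGraphon (W : ℝ → ℝ → ℝ) : Prop :=
  (∀ x y, W x y = W y x) ∧ Measurable (Function.uncurry W) ∧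
    ∀ x y, W x y ∈ Set.Icc (0 : ℝ) 1

/-- The cut norm `‖U‖_□`, the supremum over measurable `S, T ⊆ [0,1]` of
`|∫_{S×T} U|`. -/
def cutNorm (U : ℝ → ℝ → ℝ) : ℝ :=
  sSup { r : ℝ | ∃ S T : Set ℝ, MeasurableSet S ∧ MeasurableSet T ∧
    S ⊆ Set.Icc 0 1 ∧ T ⊆ Set.Icc 0 1 ∧
    r = |∫ p in S ×ˢ T, U p.1 p.2| }

/-- `d_□(W₁, W₂) = ‖W₁ - W₂‖_□`. -/
def dCut (W₁ W₂ : ℝ → ℝ → ℝ) : ℝ := cutNorm (fun x y => W₁ x y - W₂ x y)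

/-- A Lebesgue-measure-preserving map `[0,1] → [0,1]`. -/
def IsMPSelf (σ : ℝ → ℝ) : Prop :=
  MeasureTheory.MeasurePreserving σ
      (MeasureTheory.volume.restrict (Set.Icc (0:ℝ) 1))
      (MeasureTheory.volume.restrict (Set.Icc (0:ℝ) 1)) ∧
    Set.MapsTo σ (Set.Icc (0:ℝ) 1) (Set.Icc (0:ℝ) 1)

/-- The cut distance `δ_□(W₁, W₂)`. -/
def deltaCut (W₁ W₂ : ℝ → ℝ → ℝ) : ℝ :=
  sInf { r : ℝ | ∃ σ₁ σ₂ : ℝ → ℝ, IsMPSelf σ₁ ∧ IsMPSelf σ₂ ∧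
    r = cutNorm (fun x y => W₁ (σ₁ x) (σ₁ y) - W₂ (σ₂ x) (σ₂ y)) }

/-- The binary entropy function `h` (base-2 logarithm; `logb 2 0 = 0` by convention,
so `h 0 = h 1 = 0`). -/
def binEnt (x : ℝ) : ℝ := -x * Real.logb 2 x - (1 - x) * Real.logb 2 (1 - x)

/-- `h̃ x = h (min x (1/2))`. -/
def htilde (x : ℝ) : ℝ := binEnt (min x (1/2))

/-- The entropy `Ent(W) = ∫₀¹∫₀¹ h(W(x,y)) dx dy` of a graphon. -/
def graphonEnt (W : ℝ → ℝ → ℝ) : ℝ :=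
  ∫ x in Set.Icc (0:ℝ) 1, ∫ y in Set.Icc (0:ℝ) 1, binEnt (W x y)

open Classical in
/-- The graphon `W_G` of a simple graph `G` on `{1, …, n}` (vertices as `Fin n`,
vertex `i : Fin n` representing `i+1`): `W_G x y = 1` iff `⌈nx⌉⌈ny⌉ ∈ E(G)`. -/
def graphonOfGraph {n : ℕ} (G : SimpleGraph (Fin n)) : ℝ → ℝ → ℝ := fun x y =>
  if ∃ i j : Fin n, G.Adj i j ∧ ⌈(n : ℝ) * x⌉ = ((i : ℕ) : ℤ) + 1 ∧
      ⌈(n : ℝ) * y⌉ = ((j : ℕ) : ℤ) + 1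
  then 1 else 0

/-- A labelled graph class: a set of graphs on `{1,…,n}` for each `n`. -/
abbrev GraphClass := ∀ n : ℕ, Set (SimpleGraph (Fin n))

/-- A graph class is closed under relabelling by permutations. -/
def IsGraphClass (Q : GraphClass) : Prop :=
  ∀ (n : ℕ) (π : Equiv.Perm (Fin n)) (G : SimpleGraph (Fin n)),
    G ∈ Q n → G.comap ⇑π ∈ Q n

/-- A hereditary graph class: a graph class closed under taking induced subgraphs
(relabelled by the order-preserving bijection). -/
def IsHereditary (Q : GraphClass) : Prop :=
  IsGraphClass Q ∧
    ∀ (m n : ℕ) (f : Fin m → Fin n), StrictMono f →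
      ∀ G ∈ Q n, G.comap f ∈ Q m

/-- `Q̂`: the set of graphons which are limits (in cut distance) of sequences of graphs in
the class `Q` whose orders tend to infinity. -/
def limitSet (Q : GraphClass) : Set (ℝ → ℝ → ℝ) :=
  { W | IsGraphon W ∧
    ∃ (nk : ℕ → ℕ) (Gk : ∀ k, SimpleGraph (Fin (nk k))),
      (∀ k, Gk k ∈ Q (nk k)) ∧ Filter.Tendsto nk Filter.atTop Filter.atTop ∧
      Filter.Tendsto (fun k => deltaCut (graphonOfGraph (Gk k)) W) Filter.atTop (nhds 0) }

/-- `C(n,2) = n(n-1)/2` as a real number. -/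
def choose2 (n : ℕ) : ℝ := (n : ℝ) * ((n : ℝ) - 1) / 2

open Classical in
/-- The step function `E[W | P]` obtained by averaging `W` over the products of the
parts of the partition `P` of `[0,1]`. -/
def condExpPart {k : ℕ} (P : Fin k → Set ℝ) (W : ℝ → ℝ → ℝ) : ℝ → ℝ → ℝ := fun x y =>
  ∑ i : Fin k, ∑ j : Fin k,
    if x ∈ P i ∧ y ∈ P j then ⨍ p in (P i) ×ˢ (P j), W p.1 p.2 else 0

/-- `W̄_n`: the step function of `W` for the partition of `[0,1]` into `n` consecutive
intervals of length `1/n`. -/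
def barStep (n : ℕ) (W : ℝ → ℝ → ℝ) : ℝ → ℝ → ℝ :=
  condExpPart (fun i : Fin n => Set.Ioc (((i : ℕ) : ℝ)/n) ((((i : ℕ) : ℝ) + 1)/n)) W

/-- `N̂_□(n, δ; W)`: the number of graphs `G` on `{1,…,n}` with `d_□(W_G, W) ≤ δ`. -/
def NhatCut (n : ℕ) (δ : ℝ) (W : ℝ → ℝ → ℝ) : ℕ :=
  Nat.card {G : SimpleGraph (Fin n) // dCut (graphonOfGraph G) W ≤ δ}

/-- `N_□(n, δ; W)`: the number of graphs `G` on `{1,…,n}` with `δ_□(W_G, W) ≤ δ`. -/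
def NCut (n : ℕ) (δ : ℝ) (W : ℝ → ℝ → ℝ) : ℕ :=
  Nat.card {G : SimpleGraph (Fin n) // deltaCut (graphonOfGraph G) W ≤ δ}

open Classical in
/-- The induced density `p(F; W)` of a graph `F` on `{1,…,k}` in a graphon `W`. -/
def inducedDensity {k : ℕ} (F : SimpleGraph (Fin k)) (W : ℝ → ℝ → ℝ) : ℝ :=
  ∫ x : Fin k → ℝ in Set.univ.pi (fun _ : Fin k => Set.Icc (0:ℝ) 1),
    ∏ i : Fin k, ∏ j : Fin k,
      if i < j then (if F.Adj i j then W (x i) (x j) else 1 - W (x i) (x j)) else 1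

open Classical in
/-- The randomness support graphon `1_{rand(W)}` of `W`. -/
def randIndicator (W : ℝ → ℝ → ℝ) : ℝ → ℝ → ℝ := fun x y =>
  if 0 < W x y ∧ W x y < 1 then 1 else 0

/-- A kernel `U` is `K_r`-free if `∏_{i<j} U(x_i, x_j) = 0` for a.e. `x ∈ [0,1]^r`. -/
def KFree (r : ℕ) (U : ℝ → ℝ → ℝ) : Prop :=
  ∀ᵐ x ∂(MeasureTheory.volume.restrict (Set.univ.pi fun _ : Fin r => Set.Icc (0:ℝ) 1)),
    (∏ i : Fin r, ∏ j : Fin r, if i < j then U (x i) (x j) else 1) = 0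

open Classical in
/-- The graphon `W^{(r,s)}`: equal to `1/2` off the diagonal blocks, `1` on the first `s`
diagonal blocks `I_i × I_i`, and `0` on the remaining diagonal blocks. -/
def Wrs (r s : ℕ) : ℝ → ℝ → ℝ := fun x y =>
  if ∃ i j : Fin r, i ≠ j ∧ x ∈ Set.Ioc (((i:ℕ):ℝ)/r) ((((i:ℕ):ℝ)+1)/r) ∧
      y ∈ Set.Ioc (((j:ℕ):ℝ)/r) ((((j:ℕ):ℝ)+1)/r)
  then 1/2
  else if ∃ i : Fin r, (i:ℕ) < s ∧ x ∈ Set.Ioc (((i:ℕ):ℝ)/r) ((((i:ℕ):ℝ)+1)/r) ∧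
      y ∈ Set.Ioc (((i:ℕ):ℝ)/r) ((((i:ℕ):ℝ)+1)/r)
  then 1 else 0

/-- `E_r = ⋃_{i ≠ j} I_i × I_j` where `I_i`, `i = 1, …, r`, are the consecutive
intervals of length `1/r` in `[0,1]`. -/
def Er (r : ℕ) : Set (ℝ × ℝ) :=
  ⋃ (i : Fin r) (j : Fin r) (_ : i ≠ j),
    (Set.Ioc (((i:ℕ):ℝ)/r) ((((i:ℕ):ℝ)+1)/r)) ×ˢ (Set.Ioc (((j:ℕ):ℝ)/r) ((((j:ℕ):ℝ)+1)/r))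

/-- `R_r`: the set of graphons equal to `1/2` on `E_r` and `{0,1}`-valued elsewhere
on `[0,1]²`. -/
def Rset (r : ℕ) : Set (ℝ → ℝ → ℝ) :=
  { W | IsGraphon W ∧ (∀ p ∈ Er r, W p.1 p.2 = 1/2) ∧
      ∀ p ∈ ((Set.Icc (0:ℝ) 1) ×ˢ (Set.Icc (0:ℝ) 1)) \ Er r,
        W p.1 p.2 = 0 ∨ W p.1 p.2 = 1 }

/-- A graphon is random-free if it is `{0,1}`-valued a.e. on `[0,1]²`. -/
def IsRandomFree (W : ℝ → ℝ → ℝ) : Prop :=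
  ∀ᵐ p ∂(MeasureTheory.volume.restrict ((Set.Icc (0:ℝ) 1) ×ˢ (Set.Icc (0:ℝ) 1))),
    W (Prod.fst p) (Prod.snd p) = 0 ∨ W (Prod.fst p) (Prod.snd p) = 1

/-!
Testing the cut norm against pairs of measures `ν₁, ν₂ ≤ μ` instead of pairs of sets makes it
stable under pushing `μ` forward along any measurable map. Hence an overlay of `W_G` with `W̄_n`
by measure-preserving maps `σ₁, σ₂` loses nothing when `x` is replaced by the pair of vertices
whose cells contain `σ₁ x` and `σ₂ x`: it becomes a coupling of two uniform vertices. Weak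
regularity replaces both kernels by step kernels at cost `ε` each, so only the induced coupling of
the finitely many vertex types matters. Rounding it down to multiples of `1 / n` and matching
vertices type by type turns it into a permutation, with an error proportional to the number of
pairs of types over `n`; undoing the two regularisations costs `2 ε` more. Regularity takes about
`1 / ε²` steps and each multiplies the number of types by `4`, so that `ε = 4 / √(log₂ n)` leaves
about `n ^ (1 / 4)` pairs of types. The two copies of `d_□(W, W̄_n)` come from passing from `W` to
`W̄_n` and back.
-/

section Domination

variable {Ω Ω' : Type*} [MeasurableSpace Ω] [MeasurableSpace Ω']

theorem exists_withDensity_eq_of_le {μ ν : Measure Ω} [SigmaFinite μ] [SigmaFinite ν]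
    (h : ν ≤ μ) : ∃ g : Ω → ENNReal, Measurable g ∧ g ≤ 1 ∧ μ.withDensity g = ν := by
  refine ⟨fun x => min (ν.rnDeriv μ x) 1, (Measure.measurable_rnDeriv ν μ).min measurable_const,
    fun x => min_le_right _ _, ?_⟩
  rw [← Measure.withDensity_rnDeriv_eq ν μ (Measure.absolutelyContinuous_of_le h)]
  refine withDensity_congr_ae ?_
  rw [Measure.withDensity_rnDeriv_eq ν μ (Measure.absolutelyContinuous_of_le h)]
  filter_upwards [Measure.rnDeriv_le_one_of_le h] with x hx using min_eq_left hx

theorem withDensity_le_of_le_one {μ : Measure Ω} {g : Ω → ENNReal} (hg : g ≤ 1) :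
    μ.withDensity g ≤ μ :=
  (withDensity_mono (ae_of_all _ hg)).trans_eq withDensity_one

theorem exists_le_map_eq_of_le_map {μ : Measure Ω} [IsFiniteMeasure μ] {f : Ω → Ω'}
    (hf : Measurable f) {ν : Measure Ω'} (h : ν ≤ μ.map f) : ∃ ν' ≤ μ, ν'.map f = ν := by
  have := isFiniteMeasure_of_le _ h
  obtain ⟨g, hg, hg1, rfl⟩ := exists_withDensity_eq_of_le h
  refine ⟨μ.withDensity (g ∘ f), withDensity_le_of_le_one fun x => hg1 (f x), ?_⟩
  ext s hs
  rw [Measure.map_apply hf hs, withDensity_apply _ (hf hs), withDensity_apply _ hs,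
    setLIntegral_map hs hg hf]
  rfl

theorem exists_add_eq_of_le_add {μ₁ μ₂ ν : Measure Ω} [IsFiniteMeasure μ₁] [IsFiniteMeasure μ₂]
    (h : ν ≤ μ₁ + μ₂) : ∃ ν₁ ≤ μ₁, ∃ ν₂ ≤ μ₂, ν₁ + ν₂ = ν := by
  have := isFiniteMeasure_of_le _ h
  obtain ⟨g, -, hg1, rfl⟩ := exists_withDensity_eq_of_le h
  exact ⟨_, withDensity_le_of_le_one hg1, _, withDensity_le_of_le_one hg1,
    (withDensity_add_measure μ₁ μ₂ g).symm⟩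

theorem exists_integral_le_setIntegral_of_le {μ : Measure Ω} [IsFiniteMeasure μ] {h : Ω → ℝ}
    (hh : Integrable h μ) :
    ∃ P, MeasurableSet P ∧ ∀ ν ≤ μ, ∫ x, h x ∂ν ≤ ∫ x in P, h x ∂μ := by
  obtain ⟨h', hm, he⟩ := hh.aestronglyMeasurable
  let P := {x | 0 ≤ h' x}
  have hP : MeasurableSet P := measurableSet_le measurable_const hm.measurable
  refine ⟨P, hP, fun ν hν => ?_⟩
  have hi : Integrable h' μ := hh.congr he
  calc ∫ x, h x ∂ν = ∫ x, h' x ∂ν :=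
        integral_congr_ae ((Measure.absolutelyContinuous_of_le hν).ae_eq he)
    _ ≤ ∫ x, P.indicator h' x ∂ν := by
        refine integral_mono (hi.mono_measure hν) ((hi.mono_measure hν).indicator hP) fun x => ?_
        by_cases hx : x ∈ P
        · simp [hx]
        · simpa [hx] using (not_le.1 hx).le
    _ ≤ ∫ x, P.indicator h' x ∂μ :=
        integral_mono_measure hν (ae_of_all _ fun x => indicator_nonneg (fun _ => id) x)
          (hi.indicator hP)
    _ = ∫ x in P, h' x ∂μ := integral_indicator hP
    _ = ∫ x in P, h x ∂μ := (integral_congr_ae (ae_restrict_of_ae he)).symm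

theorem exists_integral_prod_le_setIntegral {μ ν₁ ν₂ : Measure Ω} [IsFiniteMeasure μ]
    {U : Ω × Ω → ℝ} (hU : Integrable U (μ.prod μ)) (h₁ : ν₁ ≤ μ) (h₂ : ν₂ ≤ μ) :
    ∃ S T, MeasurableSet S ∧ MeasurableSet T ∧
      ∫ p, U p ∂ν₁.prod ν₂ ≤ ∫ p in S ×ˢ T, U p ∂μ.prod μ := by
  have := isFiniteMeasure_of_le _ h₁
  have := isFiniteMeasure_of_le _ h₂
  have hU' : Integrable U (μ.prod ν₂) := hU.mono_measure (Measure.prod_mono le_rfl h₂)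
  obtain ⟨S, hS, hSle⟩ := exists_integral_le_setIntegral_of_le hU'.integral_prod_left
  have hUS : Integrable U ((μ.restrict S).prod μ) :=
    hU.mono_measure (Measure.prod_mono Measure.restrict_le_self le_rfl)
  obtain ⟨T, hT, hTle⟩ := exists_integral_le_setIntegral_of_le hUS.integral_prod_right
  refine ⟨S, T, hS, hT, ?_⟩
  calc ∫ p, U p ∂ν₁.prod ν₂ = ∫ x, ∫ y, U (x, y) ∂ν₂ ∂ν₁ :=
        integral_prod _ (hU.mono_measure (Measure.prod_mono h₁ h₂))
    _ ≤ ∫ x in S, ∫ y, U (x, y) ∂ν₂ ∂μ := hSle ν₁ h₁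
    _ = ∫ y, ∫ x in S, U (x, y) ∂μ ∂ν₂ :=
        integral_integral_swap (hUS.mono_measure (Measure.prod_mono le_rfl h₂))
    _ ≤ ∫ y in T, ∫ x in S, U (x, y) ∂μ ∂μ := hTle ν₂ h₂
    _ = ∫ p in S ×ˢ T, U p ∂μ.prod μ := by
        rw [← Measure.prod_restrict, integral_prod_symm]
        exact hUS.mono_measure (Measure.prod_mono le_rfl Measure.restrict_le_self)

end Domination

/-- `CutNormLE μ U c` says that the kernel `U` has cut norm at most `c` with respect to `μ`. The
test objects are measures `ν₁, ν₂ ≤ μ` rather than sets: by `CutNormLE.of_forall_measurableSet`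
this amounts to the same, and such measures can be pushed forward along any measurable map. -/
def CutNormLE {Ω : Type*} [MeasurableSpace Ω] (μ : Measure Ω) (U : Ω × Ω → ℝ) (c : ℝ) : Prop :=
  ∀ ⦃ν₁ ν₂ : Measure Ω⦄, ν₁ ≤ μ → ν₂ ≤ μ → |∫ p, U p ∂ν₁.prod ν₂| ≤ c

section CutNorm

variable {Ω Ω' : Type*} [MeasurableSpace Ω] [MeasurableSpace Ω'] {μ : Measure Ω}
  {U V : Ω × Ω → ℝ} {c d : ℝ}

namespace CutNormLE

theorem mono (hU : CutNormLE μ U c) (hcd : c ≤ d) : CutNormLE μ U d :=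
  fun _ _ h₁ h₂ => (hU h₁ h₂).trans hcd

theorem congr_ae [SFinite μ] (hU : CutNormLE μ U c) (hUV : U =ᵐ[μ.prod μ] V) :
    CutNormLE μ V c := fun ν₁ ν₂ h₁ h₂ => by
  have hac := Measure.absolutelyContinuous_of_le (Measure.prod_mono h₁ h₂)
  rw [← integral_congr_ae (hac.ae_eq hUV)]
  exact hU h₁ h₂

theorem neg (hU : CutNormLE μ U c) : CutNormLE μ (-U) c := fun ν₁ ν₂ h₁ h₂ => by
  rw [integral_neg', abs_neg]
  exact hU h₁ h₂

variable [IsFiniteMeasure μ]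

theorem add (hU : CutNormLE μ U c) (hV : CutNormLE μ V d) (hUi : Integrable U (μ.prod μ))
    (hVi : Integrable V (μ.prod μ)) : CutNormLE μ (U + V) (c + d) := fun ν₁ ν₂ h₁ h₂ => by
  have hle := Measure.prod_mono h₁ h₂
  rw [integral_add' (hUi.mono_measure hle) (hVi.mono_measure hle)]
  exact (abs_add_le _ _).trans (add_le_add (hU h₁ h₂) (hV h₁ h₂))

theorem sub (hU : CutNormLE μ U c) (hV : CutNormLE μ V d) (hUi : Integrable U (μ.prod μ))
    (hVi : Integrable V (μ.prod μ)) : CutNormLE μ (U - V) (c + d) := by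
  simpa only [sub_eq_add_neg] using hU.add hV.neg hUi hVi.neg

theorem comp {μ' : Measure Ω'} {D : Ω' × Ω' → ℝ} {τ : Ω → Ω'} (hτ : MeasurePreserving τ μ μ')
    (hD : CutNormLE μ' D c) (hDm : AEStronglyMeasurable D (μ'.prod μ')) :
    CutNormLE μ (D ∘ Prod.map τ τ) c := fun ν₁ ν₂ h₁ h₂ => by
  obtain ⟨hτ, rfl⟩ := hτ
  have := isFiniteMeasure_of_le _ h₁
  have := isFiniteMeasure_of_le _ h₂
  have h₁' := Measure.map_mono h₁ hτ
  have h₂' := Measure.map_mono h₂ hτ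
  have hm := hDm.mono_measure (Measure.prod_mono h₁' h₂')
  have hle := hD h₁' h₂'
  rw [Measure.map_prod_map _ _ hτ hτ] at hm hle
  rwa [integral_map (hτ.prodMap hτ).aemeasurable hm] at hle

theorem map {D : Ω' × Ω' → ℝ} {τ : Ω → Ω'} (hτ : Measurable τ)
    (hDm : AEStronglyMeasurable D ((μ.map τ).prod (μ.map τ)))
    (hD : CutNormLE μ (D ∘ Prod.map τ τ) c) : CutNormLE (μ.map τ) D c := fun ν₁ ν₂ h₁ h₂ => by
  have hm := hDm.mono_measure (Measure.prod_mono h₁ h₂)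
  obtain ⟨ν₁, hν₁, rfl⟩ := exists_le_map_eq_of_le_map hτ h₁
  obtain ⟨ν₂, hν₂, rfl⟩ := exists_le_map_eq_of_le_map hτ h₂
  have := isFiniteMeasure_of_le _ hν₁
  have := isFiniteMeasure_of_le _ hν₂
  rw [Measure.map_prod_map _ _ hτ hτ] at hm ⊢
  rw [integral_map (hτ.prodMap hτ).aemeasurable hm]
  exact hD hν₁ hν₂

theorem of_forall_measurableSet (hU : Integrable U (μ.prod μ))
    (h : ∀ S T, MeasurableSet S → MeasurableSet T → |∫ p in S ×ˢ T, U p ∂μ.prod μ| ≤ c) :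
    CutNormLE μ U c := fun ν₁ ν₂ h₁ h₂ => by
  have := isFiniteMeasure_of_le _ h₁
  have := isFiniteMeasure_of_le _ h₂
  rw [abs_le']
  constructor
  · obtain ⟨S, T, hS, hT, hST⟩ := exists_integral_prod_le_setIntegral hU h₁ h₂
    exact hST.trans ((le_abs_self _).trans (h S T hS hT))
  · obtain ⟨S, T, hS, hT, hST⟩ := exists_integral_prod_le_setIntegral hU.neg h₁ h₂
    simp only [Pi.neg_apply, integral_neg] at hST
    exact hST.trans ((neg_le_abs _).trans (h S T hS hT))

end CutNormLE

theorem abs_integral_prod_le {ν₁ ν₂ e₁ e₂ : Measure Ω} [IsFiniteMeasure e₁] [IsFiniteMeasure e₂]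
    {C : ℝ} (hC₀ : 0 ≤ C) (hC : ∀ p, |U p| ≤ C) (h₁ : ν₁ ≤ e₁) (h₂ : ν₂ ≤ e₂) :
    |∫ p, U p ∂ν₁.prod ν₂| ≤ C * (e₁.real univ * e₂.real univ) := by
  have := isFiniteMeasure_of_le _ h₁
  have := isFiniteMeasure_of_le _ h₂
  calc |∫ p, U p ∂ν₁.prod ν₂| ≤ C * (ν₁.prod ν₂).real univ :=
        norm_integral_le_of_norm_le_const (f := U) (ae_of_all _ hC)
    _ = C * (ν₁.real univ * ν₂.real univ) := by
        rw [← univ_prod_univ, measureReal_prod_prod]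
    _ ≤ C * (e₁.real univ * e₂.real univ) := by
        gcongr
        · exact ENNReal.toReal_mono (measure_ne_top _ _) (h₁ univ)
        · exact ENNReal.toReal_mono (measure_ne_top _ _) (h₂ univ)

theorem CutNormLE.of_le_add {μ' e : Measure Ω} [IsFiniteMeasure μ] [IsFiniteMeasure e]
    (hU : CutNormLE μ U c) (hle : μ' ≤ μ + e) {C : ℝ} (hC₀ : 0 ≤ C) (hC : ∀ p, |U p| ≤ C)
    (hUm : AEStronglyMeasurable U ((μ + e).prod (μ + e))) :
    CutNormLE μ' U (c + C * (μ.real univ + μ'.real univ) * e.real univ) :=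
  fun ν₁ ν₂ h₁ h₂ => by
  have := isFiniteMeasure_of_le _ hle
  have := isFiniteMeasure_of_le _ h₂
  have hUi : Integrable U ((μ + e).prod (μ + e)) := .of_bound hUm C (ae_of_all _ hC)
  obtain ⟨α₁, hα₁, β₁, hβ₁, rfl⟩ := exists_add_eq_of_le_add (h₁.trans hle)
  obtain ⟨α₂, hα₂, β₂, hβ₂, hν₂⟩ := exists_add_eq_of_le_add (h₂.trans hle)
  have := isFiniteMeasure_of_le _ hα₁
  have := isFiniteMeasure_of_le _ hβ₁
  have := isFiniteMeasure_of_le _ hα₂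
  have := isFiniteMeasure_of_le _ hβ₂
  have hi {ν₁ ν₂} (h₁ : ν₁ ≤ μ + e) (h₂ : ν₂ ≤ μ + e) [SFinite ν₂] : Integrable U (ν₁.prod ν₂) :=
    hUi.mono_measure (Measure.prod_mono h₁ h₂)
  have hα {α : Measure Ω} (h : α ≤ μ) : α ≤ μ + e := Measure.le_add_right h
  have hβ {β : Measure Ω} (h : β ≤ e) : β ≤ μ + e := Measure.le_add_left h
  have hsplit : ∫ p, U p ∂(α₁ + β₁).prod ν₂
      = ∫ p, U p ∂α₁.prod α₂ + ∫ p, U p ∂α₁.prod β₂ + ∫ p, U p ∂β₁.prod ν₂ := by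
    rw [Measure.add_prod, integral_add_measure (hi (hα hα₁) (h₂.trans hle))
      (hi (hβ hβ₁) (h₂.trans hle)), ← hν₂, Measure.prod_add,
      integral_add_measure (hi (hα hα₁) (hα hα₂)) (hi (hα hα₁) (hβ hβ₂))]
  rw [hsplit]
  have hαβ := abs_integral_prod_le hC₀ hC hα₁ hβ₂
  have hβν := abs_integral_prod_le hC₀ hC hβ₁ h₂
  linarith [abs_add_three (∫ p, U p ∂α₁.prod α₂) (∫ p, U p ∂α₁.prod β₂) (∫ p, U p ∂β₁.prod ν₂),
    hU hα₁ hα₂]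

theorem exists_le_add_of_le_add {μ μ' d : Measure Ω} [IsFiniteMeasure μ'] [IsFiniteMeasure d]
    (hle : μ ≤ μ' + d) (huniv : μ' univ = μ univ) : ∃ e, μ' ≤ μ + e ∧ e univ ≤ d univ := by
  obtain ⟨μ₁, h₁, μ₂, h₂, rfl⟩ := exists_add_eq_of_le_add hle
  have := isFiniteMeasure_of_le _ h₁
  refine ⟨μ' - μ₁, ?_, ?_⟩
  · calc μ' = μ' - μ₁ + μ₁ := (Measure.sub_add_cancel_of_le h₁).symm
      _ ≤ μ' - μ₁ + (μ₁ + μ₂) := by gcongr; exact Measure.le_add_right le_rfl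
      _ = μ₁ + μ₂ + (μ' - μ₁) := add_comm _ _
  · rw [Measure.sub_apply .univ h₁, huniv, Measure.add_apply,
      ENNReal.add_sub_cancel_left (measure_ne_top _ _)]
    exact h₂ univ

end CutNorm

section Regularity

variable {Ω : Type*} [MeasurableSpace Ω] {μ : Measure Ω} [IsProbabilityMeasure μ]

theorem exists_integral_sub_indicator_sq_le {R : Ω → ℝ} (hR : MemLp R 2 μ) {B : Set Ω}
    (hB : MeasurableSet B) {ε : ℝ} (hε : 0 ≤ ε) (h : ε ≤ |∫ x in B, R x ∂μ|) :
    ∃ d, |d| = ε ∧ ∫ x, (R x - B.indicator (fun _ => d) x) ^ 2 ∂μ ≤ ∫ x, R x ^ 2 ∂μ - ε ^ 2 := by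
  obtain ⟨d, hd, hdR⟩ : ∃ d, |d| = ε ∧ d * ∫ x in B, R x ∂μ = ε * |∫ x in B, R x ∂μ| := by
    rcases abs_cases (∫ x in B, R x ∂μ) with ⟨h, -⟩ | ⟨h, -⟩
    · exact ⟨ε, abs_of_nonneg hε, by rw [h]⟩
    · exact ⟨-ε, by rw [abs_neg, abs_of_nonneg hε], by rw [h]; ring⟩
  have hRi : Integrable R μ := hR.integrable one_le_two
  have h₁ : Integrable (fun x => -2 * d * B.indicator R x) μ := (hRi.indicator hB).const_mul _
  have h₂ : Integrable (B.indicator fun _ => d ^ 2) μ := (integrable_const _).indicator hB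
  refine ⟨d, hd, ?_⟩
  calc ∫ x, (R x - B.indicator (fun _ => d) x) ^ 2 ∂μ
      = ∫ x, R x ^ 2 + -2 * d * B.indicator R x + B.indicator (fun _ => d ^ 2) x ∂μ := by
        refine integral_congr_ae (ae_of_all _ fun x => ?_)
        by_cases hx : x ∈ B
        · simp only [hx, indicator_of_mem]; ring
        · simp [hx]
    _ = ∫ x, R x ^ 2 ∂μ + -2 * d * ∫ x in B, R x ∂μ + d ^ 2 * μ.real B := by
        refine (integral_add (hR.integrable_sq.add h₁) h₂).trans ?_
        rw [integral_add' hR.integrable_sq h₁, integral_const_mul, integral_indicator hB,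
          integral_indicator_const _ hB, smul_eq_mul, mul_comm (μ.real B)]
    _ = ∫ x, R x ^ 2 ∂μ + -2 * ε * |∫ x in B, R x ∂μ| + ε ^ 2 * μ.real B := by
        rw [mul_assoc, hdR, mul_assoc, ← sq_abs d, hd]
    _ ≤ ∫ x, R x ^ 2 ∂μ - ε ^ 2 := by
        linarith [mul_le_mul_of_nonneg_left h hε,
          mul_le_of_le_one_right (sq_nonneg ε) (measureReal_le_one (μ := μ) (s := B))]

theorem exists_integral_sub_indicator_prod_sq_le {ε : ℝ} (hε : 0 ≤ ε) {R : Ω × Ω → ℝ}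
    (hR : MemLp R 2 (μ.prod μ)) (h : ¬ CutNormLE μ R ε) :
    ∃ S T d, MeasurableSet S ∧ MeasurableSet T ∧ |d| = ε ∧
      ∫ z, (R z - (S ×ˢ T).indicator (fun _ => d) z) ^ 2 ∂μ.prod μ ≤
        ∫ z, R z ^ 2 ∂μ.prod μ - ε ^ 2 := by
  obtain ⟨S, T, hS, hT, hST⟩ : ∃ S T, MeasurableSet S ∧ MeasurableSet T ∧
      ε < |∫ z in S ×ˢ T, R z ∂μ.prod μ| := by
    contrapose! h
    exact .of_forall_measurableSet (hR.integrable one_le_two) h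
  obtain ⟨d, hd, hle⟩ := exists_integral_sub_indicator_sq_le hR (hS.prod hT) hε hST.le
  exact ⟨S, T, d, hS, hT, hd, hle⟩

open Classical in
theorem exists_step_cutNormLE {ε : ℝ} (hε : 0 < ε) (N : ℕ) {R : Ω × Ω → ℝ}
    (hR : MemLp R 2 (μ.prod μ)) (hE : ∫ z, R z ^ 2 ∂μ.prod μ ≤ N * ε ^ 2) :
    ∃ (p : Ω → Fin N → Prop × Prop) (a : (Fin N → Prop × Prop) × (Fin N → Prop × Prop) → ℝ),
      Measurable p ∧ (∀ z, |a z| ≤ N * ε) ∧ CutNormLE μ (R - a ∘ Prod.map p p) ε := by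
  induction N generalizing R with
  | zero =>
    refine ⟨fun _ _ => (True, True), 0, measurable_const, by simp, ?_⟩
    by_contra h
    rw [Pi.zero_comp, sub_zero] at h
    obtain ⟨S, T, d, -, -, -, hle⟩ := exists_integral_sub_indicator_prod_sq_le hε.le hR h
    have hpos : 0 ≤ ∫ z, (R z - (S ×ˢ T).indicator (fun _ => d) z) ^ 2 ∂μ.prod μ :=
      integral_nonneg fun z => sq_nonneg _
    have : 0 < ε ^ 2 := by positivity
    rw [Nat.cast_zero, zero_mul] at hE
    linarith
  | succ N ih =>
    by_cases h : CutNormLE μ R ε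
    · exact ⟨fun _ _ => (True, True), 0, measurable_const,
        fun z => by rw [Pi.zero_apply, abs_zero]; positivity, by simpa using h⟩
    obtain ⟨S, T, d, hS, hT, hd, hle⟩ := exists_integral_sub_indicator_prod_sq_le hε.le hR h
    obtain ⟨p, a, hp, ha, hcut⟩ := ih (R := fun z => R z - (S ×ˢ T).indicator (fun _ => d) z)
      (hR.sub ((memLp_const d).indicator (hS.prod hT))) (by push_cast at hE; linarith)
    have hp' : Measurable fun x => (Fin.cons (x ∈ S, x ∈ T) (p x) : Fin (N + 1) → Prop × Prop) :=
      measurable_pi_iff.2 <| Fin.cases (hS.mem.prodMk hT.mem)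
        fun k => (measurable_pi_apply k).comp hp
    refine ⟨_, fun z => a (Fin.tail z.1, Fin.tail z.2) + if (z.1 0).1 ∧ (z.2 0).2 then d else 0,
      hp', fun z => ?_, ?_⟩
    · have hdz : |if (z.1 0).1 ∧ (z.2 0).2 then d else 0| ≤ ε := by
        split_ifs
        exacts [hd.le, abs_zero.trans_le hε.le]
      push_cast
      linarith [abs_add_le (a (Fin.tail z.1, Fin.tail z.2))
        (if (z.1 0).1 ∧ (z.2 0).2 then d else 0), ha (Fin.tail z.1, Fin.tail z.2)]
    · convert hcut using 1
      ext z
      simp [Prod.map, indicator, sub_add_eq_sub_sub, sub_right_comm]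

end Regularity

section Rounding

open ProbabilityTheory
open scoped Finset

theorem exists_injective_comp_eq {α ι κ : Type*} [Fintype α] [Fintype ι] [DecidableEq κ]
    {P : α → κ} {p : ι → κ} (h : ∀ k, #{a | P a = k} ≤ #{u | p u = k}) :
    ∃ f : α → ι, Function.Injective f ∧ ∀ a, p (f a) = P a := by
  have hcard k : Fintype.card {a // P a = k} ≤ Fintype.card {u // p u = k} := by
    simpa only [Fintype.card_subtype] using h k
  have φ k : {a // P a = k} ↪ {u // p u = k} :=
    (Function.Embedding.nonempty_of_card_le (hcard k)).some
  let f : α ↪ ι := (Equiv.sigmaFiberEquiv P).symm.toEmbedding.trans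
    ((Function.Embedding.sigmaMap (.refl κ) φ).trans (Equiv.sigmaFiberEquiv p).toEmbedding)
  exact ⟨f, f.injective, fun a => (φ (P a) ⟨a, rfl⟩).2⟩

theorem exists_perm_le_card_fiber {ι κ κ' : Type*} [Fintype ι] [Fintype κ] [Fintype κ']
    [DecidableEq κ] [DecidableEq κ'] (p : ι → κ) (q : ι → κ') (N : κ × κ' → ℕ)
    (hp : ∀ k, ∑ z with z.1 = k, N z ≤ #{u | p u = k})
    (hq : ∀ l, ∑ z with z.2 = l, N z ≤ #{u | q u = l}) :
    ∃ π : Equiv.Perm ι, ∀ z, N z ≤ #{u | (p (π u), q u) = z} := by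
  have hcard (P : κ × κ' → Prop) [DecidablePred P] :
      #{e : (z : κ × κ') × Fin (N z) | P e.1} = ∑ z with P z, N z := by
    rw [show ({e | P e.1} : Finset ((z : κ × κ') × Fin (N z))) =
      Finset.sigma {z | P z} fun _ => Finset.univ by ext; simp]
    simp
  obtain ⟨f, hf, hpf⟩ := exists_injective_comp_eq (α := (z : κ × κ') × Fin (N z))
    (P := fun e => e.1.1) (p := p) fun k => (hcard _).trans_le (hp k)
  obtain ⟨g, hg, hqg⟩ := exists_injective_comp_eq (α := (z : κ × κ') × Fin (N z))
    (P := fun e => e.1.2) (p := q) fun l => (hcard _).trans_le (hq l)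
  obtain ⟨π, hπ⟩ := Equiv.Perm.exists_extending_pair g f hg hf
  refine ⟨π, fun z => ?_⟩
  calc N z = #(Finset.univ.map ⟨fun i : Fin (N z) => g ⟨z, i⟩,
        hg.comp sigma_mk_injective⟩) := by simp
    _ ≤ #{u | (p (π u), q u) = z} := Finset.card_le_card fun u hu => by
        obtain ⟨i, -, rfl⟩ := Finset.mem_map.1 hu
        simp [hπ, hpf, hqg]

variable {ι : Type*} [MeasurableSpace ι] [MeasurableSingletonClass ι]

theorem measureReal_map_uniformOn_univ [Fintype ι] {κ : Type*} [MeasurableSpace κ]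
    [MeasurableSingletonClass κ] [DecidableEq κ] (p : ι → κ) (k : κ) :
    ((uniformOn univ).map p).real {k} = #{u | p u = k} / Fintype.card ι := by
  rw [map_measureReal_apply (measurable_of_finite p) (measurableSet_singleton k),
    measureReal_def, uniformOn_univ, show p ⁻¹' {k} = ({u | p u = k} : Finset ι) by ext; simp,
    Measure.count_apply_finset]
  simp

theorem sum_floor_measureReal_le_card_fiber [Fintype ι] [Nonempty ι] {β κ : Type*} [Fintype β]
    [MeasurableSpace β] [MeasurableSingletonClass β] [MeasurableSpace κ]
    [MeasurableSingletonClass κ] [DecidableEq κ] {X : Measure β} [IsFiniteMeasure X] {f : β → κ}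
    {p : ι → κ} (h : X.map f = (uniformOn univ).map p) (k : κ) :
    ∑ z with f z = k, ⌊Fintype.card ι * X.real {z}⌋₊ ≤ #{u | p u = k} := by
  have hn : (0 : ℝ) < Fintype.card ι := by exact_mod_cast Fintype.card_pos
  have hfiber : ((({z | f z = k} : Finset β) : Set β)) = f ⁻¹' {k} := by ext; simp
  suffices (∑ z with f z = k, ⌊Fintype.card ι * X.real {z}⌋₊ : ℝ) ≤ #{u | p u = k} by
    exact_mod_cast this
  calc (∑ z with f z = k, ⌊Fintype.card ι * X.real {z}⌋₊ : ℝ)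
      ≤ ∑ z with f z = k, Fintype.card ι * X.real {z} := by
        gcongr
        exact Nat.floor_le (by positivity)
    _ = Fintype.card ι * (X.map f).real {k} := by
        rw [← Finset.mul_sum, sum_measureReal_singleton, hfiber,
          map_measureReal_apply (measurable_of_finite f) (measurableSet_singleton k)]
    _ = #{u | p u = k} := by
        rw [h, measureReal_map_uniformOn_univ, mul_div_cancel₀ _ hn.ne']

theorem measure_le_of_forall_measureReal_singleton_le {α : Type*} [MeasurableSpace α]
    [MeasurableSingletonClass α] [Countable α] {μ ν : Measure α} [IsFiniteMeasure μ]
    [IsFiniteMeasure ν] (h : ∀ a, μ.real {a} ≤ ν.real {a}) : μ ≤ ν :=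
  Measure.le_iff.2 fun s hs => by
  rw [← μ.tsum_indicator_apply_singleton s hs, ← ν.tsum_indicator_apply_singleton s hs]
  exact ENNReal.tsum_le_tsum fun a => indicator_le_indicator <|
    (ENNReal.toReal_le_toReal (measure_ne_top _ _) (measure_ne_top _ _)).1 (h a)

theorem exists_perm_le_map_uniformOn_univ [Fintype ι] [Nonempty ι] {κ κ' : Type*}
    [MeasurableSpace κ] [MeasurableSpace κ'] [MeasurableSingletonClass κ]
    [MeasurableSingletonClass κ'] [Finite κ] [Finite κ'] (p : ι → κ) (q : ι → κ')
    {X : Measure (κ × κ')} [IsFiniteMeasure X] (hp : X.map Prod.fst = (uniformOn univ).map p)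
    (hq : X.map Prod.snd = (uniformOn univ).map q) :
    ∃ π : Equiv.Perm ι, X ≤ (uniformOn univ).map (fun u => (p (π u), q u)) +
      (Fintype.card ι : NNReal)⁻¹ • Measure.count := by
  classical
  have := Fintype.ofFinite κ
  have := Fintype.ofFinite κ'
  obtain ⟨π, hπ⟩ := exists_perm_le_card_fiber p q (fun z => ⌊Fintype.card ι * X.real {z}⌋₊)
    (sum_floor_measureReal_le_card_fiber hp) (sum_floor_measureReal_le_card_fiber hq)
  refine ⟨π, measure_le_of_forall_measureReal_singleton_le fun z => ?_⟩
  have hn : (0 : ℝ) < Fintype.card ι := by exact_mod_cast Fintype.card_pos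
  have hz : (⌊Fintype.card ι * X.real {z}⌋₊ : ℝ) ≤ #{u | (p (π u), q u) = z} := by
    exact_mod_cast hπ z
  have hcount : (Measure.count : Measure (κ × κ')).real {z} = 1 := by
    rw [measureReal_def, Measure.count_singleton, ENNReal.toReal_one]
  rw [measureReal_add_apply, measureReal_map_uniformOn_univ, measureReal_nnreal_smul_apply, hcount,
    NNReal.coe_inv, NNReal.coe_natCast, mul_one, inv_eq_one_div, ← add_div, le_div_iff₀ hn,
    mul_comm]
  exact (Nat.lt_floor_add_one _).le.trans (by gcongr)

end Rounding

section Relabelling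

open ProbabilityTheory

variable {ι : Type*} [MeasurableSpace ι] [MeasurableSingletonClass ι] 

theorem measurePreserving_perm_uniformOn_univ [Finite ι] (π : Equiv.Perm ι) :
    MeasurePreserving π (uniformOn univ) (uniformOn univ) := by
  classical
  have := Fintype.ofFinite ι
  refine ⟨measurable_of_finite π, Measure.ext_of_measureReal_singleton fun k => ?_⟩
  conv_rhs => rw [← Measure.map_id (μ := uniformOn univ)]
  rw [measureReal_map_uniformOn_univ, measureReal_map_uniformOn_univ,
    Finset.card_bijective π π.bijective (t := {u | id u = k}) (by simp)]

variable [Fintype ι] [Nonempty ι]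

theorem exists_perm_cutNormLE_step {κ κ' : Type*} [MeasurableSpace κ] [MeasurableSpace κ']
    [MeasurableSingletonClass κ] [MeasurableSingletonClass κ'] [Fintype κ] [Fintype κ']
    {X : Measure (ι × ι)} [IsProbabilityMeasure X]
    (hfst : MeasurePreserving Prod.fst X (uniformOn univ))
    (hsnd : MeasurePreserving Prod.snd X (uniformOn univ))
    (p : ι → κ) (q : ι → κ') {a : κ × κ → ℝ} {b : κ' × κ' → ℝ} {M : ℝ} (hM : 0 ≤ M)
    (ha : ∀ z, |a z| ≤ M) (hb : ∀ z, |b z| ≤ M) {c : ℝ}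
    (h : CutNormLE X (a ∘ Prod.map (p ∘ Prod.fst) (p ∘ Prod.fst) -
      b ∘ Prod.map (q ∘ Prod.snd) (q ∘ Prod.snd)) c) :
    ∃ π : Equiv.Perm ι, CutNormLE (uniformOn univ)
      (a ∘ Prod.map (p ∘ π) (p ∘ π) - b ∘ Prod.map q q)
      (c + 4 * M * (Fintype.card κ * Fintype.card κ' / Fintype.card ι)) := by
  let D : (κ × κ') × (κ × κ') → ℝ :=
    a ∘ Prod.map Prod.fst Prod.fst - b ∘ Prod.map Prod.snd Prod.snd
  have hpq : Measurable (Prod.map p q) := measurable_of_finite _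
  have hD : CutNormLE (X.map (Prod.map p q)) D c :=
    .map hpq .of_discrete h
  obtain ⟨π, hπ⟩ := exists_perm_le_map_uniformOn_univ p q (X := X.map (Prod.map p q))
    (by rw [← hfst.map_eq, Measure.map_map measurable_fst hpq,
      Measure.map_map (measurable_of_finite p) measurable_fst]; rfl)
    (by rw [← hsnd.map_eq, Measure.map_map measurable_snd hpq,
      Measure.map_map (measurable_of_finite q) measurable_snd]; rfl)
  have hτ : Measurable fun u => (p (π u), q u) := measurable_of_finite _
  have := Measure.isProbabilityMeasure_map (μ := X) hpq.aemeasurable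
  have := Measure.isProbabilityMeasure_map (μ := uniformOn (univ : Set ι)) hτ.aemeasurable
  obtain ⟨e, he, heuniv⟩ := exists_le_add_of_le_add hπ (by rw [measure_univ, measure_univ])
  have heuniv' : e.real univ ≤ Fintype.card κ * Fintype.card κ' / Fintype.card ι := by
    refine (ENNReal.toReal_mono (measure_ne_top _ _) heuniv).trans_eq ?_
    rw [Measure.smul_apply, Measure.count_univ, ENat.card_eq_coe_fintype_card, Fintype.card_prod]
    simp [ENNReal.smul_def, div_eq_inv_mul]
  have : IsFiniteMeasure e := ⟨heuniv.trans_lt (measure_lt_top _ _)⟩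
  refine ⟨π, CutNormLE.comp ⟨hτ, rfl⟩ ((hD.of_le_add he (C := 2 * M) (by positivity)
    (fun z => ?_) .of_discrete).mono ?_)
      .of_discrete⟩
  · calc |D z| ≤ |a (z.1.1, z.2.1)| + |b (z.1.2, z.2.2)| := abs_sub _ _
      _ ≤ 2 * M := by linarith [ha (z.1.1, z.2.1), hb (z.1.2, z.2.2)]
  · rw [probReal_univ, probReal_univ]
    have := mul_le_mul_of_nonneg_left heuniv' hM
    linarith

theorem exists_perm_cutNormLE {X : Measure (ι × ι)} [IsProbabilityMeasure X]
    (hfst : MeasurePreserving Prod.fst X (uniformOn univ))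
    (hsnd : MeasurePreserving Prod.snd X (uniformOn univ)) {A B : ι × ι → ℝ} {ε : ℝ} (hε : 0 < ε)
    {N : ℕ} (hA : ∫ z, A z ^ 2 ∂(uniformOn univ).prod (uniformOn univ) ≤ N * ε ^ 2)
    (hB : ∫ z, B z ^ 2 ∂(uniformOn univ).prod (uniformOn univ) ≤ N * ε ^ 2) {c : ℝ}
    (h : CutNormLE X (A ∘ Prod.map Prod.fst Prod.fst - B ∘ Prod.map Prod.snd Prod.snd) c) :
    ∃ π : Equiv.Perm ι, CutNormLE (uniformOn univ) (A ∘ Prod.map π π - B)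
      (c + 4 * ε + 4 * (N * ε) * (16 ^ N / Fintype.card ι)) := by
  have hm {f : (ι × ι) × (ι × ι) → ℝ} : Integrable f (X.prod X) := .of_finite
  have hm' {f : ι × ι → ℝ} :
    Integrable f ((uniformOn univ).prod (uniformOn univ)) := .of_finite
  obtain ⟨p, a, -, ha, hAp⟩ := exists_step_cutNormLE hε N .of_discrete hA
  obtain ⟨q, b, -, hb, hBq⟩ := exists_step_cutNormLE hε N .of_discrete hB
  have hX : CutNormLE X (a ∘ Prod.map (p ∘ Prod.fst) (p ∘ Prod.fst) -
      b ∘ Prod.map (q ∘ Prod.snd) (q ∘ Prod.snd)) (c + 2 * ε) := by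
    convert (h.sub (hAp.comp hfst hm'.1) hm hm).add (hBq.comp hsnd hm'.1) hm hm using 1
    · ext z
      simp [Prod.map]
    · ring
  obtain ⟨π, hπ⟩ := exists_perm_cutNormLE_step hfst hsnd p q (by positivity) ha hb hX
  have hcard : (Fintype.card (Fin N → Prop × Prop) * Fintype.card (Fin N → Prop × Prop) : ℝ) =
      16 ^ N := by
    simp only [Fintype.card_pi_const, Fintype.card_prod, Fintype.card_prop]
    rw [← Nat.cast_mul, ← mul_pow]
    norm_num
  refine ⟨π, ?_⟩
  have hAπ := hAp.comp (measurePreserving_perm_uniformOn_univ π) hm'.1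
  convert (hπ.add hAπ hm' hm').sub hBq hm' hm' using 1
  · ext z
    simp [Prod.map]
  · rw [hcard]
    ring

end Relabelling

section UnitInterval

/-- Lebesgue measure on `[0, 1]`, as a measure on `ℝ`. -/
abbrev volIcc : Measure ℝ := volume.restrict (Icc 0 1)

instance : IsProbabilityMeasure volIcc := ⟨by simp⟩

theorem restrict_Ioc_eq_volIcc : volume.restrict (Ioc 0 1) = volIcc :=
  restrict_Ioc_eq_restrict_Icc

theorem restrict_le_volIcc {S : Set ℝ} (hS : S ⊆ Icc 0 1) : volume.restrict S ≤ volIcc :=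
  Measure.restrict_mono_set volume hS

theorem setIntegral_prod_eq_integral_prod_restrict (U : ℝ → ℝ → ℝ) (S T : Set ℝ) :
    ∫ p in S ×ˢ T, U p.1 p.2 =
      ∫ p, Function.uncurry U p ∂(volume.restrict S).prod (volume.restrict T) := by
  rw [Measure.prod_restrict]
  rfl

theorem cutNorm_le_of_cutNormLE {U : ℝ → ℝ → ℝ} {c : ℝ}
    (h : CutNormLE volIcc (Function.uncurry U) c) : cutNorm U ≤ c := by
  refine csSup_le ⟨_, ∅, ∅, .empty, .empty, empty_subset _, empty_subset _, rfl⟩ ?_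
  rintro _ ⟨S, T, -, -, hSI, hTI, rfl⟩
  rw [setIntegral_prod_eq_integral_prod_restrict]
  exact h (restrict_le_volIcc hSI) (restrict_le_volIcc hTI)

theorem abs_setIntegral_le_cutNorm {U : ℝ → ℝ → ℝ}
    (hU : Integrable (Function.uncurry U) (volIcc.prod volIcc)) {S T : Set ℝ}
    (hS : MeasurableSet S) (hT : MeasurableSet T) (hSI : S ⊆ Icc 0 1) (hTI : T ⊆ Icc 0 1) :
    |∫ p in S ×ˢ T, U p.1 p.2| ≤ cutNorm U := by
  refine le_csSup ⟨∫ p, |Function.uncurry U p| ∂volIcc.prod volIcc, ?_⟩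
    ⟨S, T, hS, hT, hSI, hTI, rfl⟩
  rintro _ ⟨S, T, -, -, hSI, hTI, rfl⟩
  rw [setIntegral_prod_eq_integral_prod_restrict]
  exact abs_integral_le_integral_abs.trans <| integral_mono_measure
    (Measure.prod_mono (restrict_le_volIcc hSI) (restrict_le_volIcc hTI))
    (ae_of_all _ fun p => abs_nonneg _) hU.abs

theorem cutNormLE_cutNorm {U : ℝ → ℝ → ℝ}
    (hU : Integrable (Function.uncurry U) (volIcc.prod volIcc)) :
    CutNormLE volIcc (Function.uncurry U) (cutNorm U) :=
  .of_forall_measurableSet hU fun S T hS hT => by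
    rw [← Measure.prod_restrict, Measure.restrict_restrict hS, Measure.restrict_restrict hT,
      ← setIntegral_prod_eq_integral_prod_restrict]
    exact abs_setIntegral_le_cutNorm hU (hS.inter measurableSet_Icc) (hT.inter measurableSet_Icc)
      inter_subset_right inter_subset_right

theorem cutNorm_nonneg (U : ℝ → ℝ → ℝ) : 0 ≤ cutNorm U :=
  Real.sSup_nonneg <| by rintro _ ⟨S, T, -, -, -, -, rfl⟩; exact abs_nonneg _

theorem cutNorm_le_of_abs_le {U : ℝ → ℝ → ℝ} {c : ℝ} (hc : 0 ≤ c) (hU : ∀ x y, |U x y| ≤ c) :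
    cutNorm U ≤ c :=
  cutNorm_le_of_cutNormLE fun _ _ h₁ h₂ =>
    (abs_integral_prod_le hc (fun p => hU p.1 p.2) h₁ h₂).trans_eq (by simp)

theorem dCut_nonneg (W₁ W₂ : ℝ → ℝ → ℝ) : 0 ≤ dCut W₁ W₂ := cutNorm_nonneg _

theorem deltaCut_nonneg (W₁ W₂ : ℝ → ℝ → ℝ) : 0 ≤ deltaCut W₁ W₂ :=
  Real.sInf_nonneg <| by rintro _ ⟨_, _, _, _, rfl⟩; exact cutNorm_nonneg _

theorem le_deltaCut {W₁ W₂ : ℝ → ℝ → ℝ} {c : ℝ} (h : ∀ σ₁ σ₂, IsMPSelf σ₁ → IsMPSelf σ₂ →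
    c ≤ cutNorm fun x y => W₁ (σ₁ x) (σ₁ y) - W₂ (σ₂ x) (σ₂ y)) : c ≤ deltaCut W₁ W₂ := by
  have hid : IsMPSelf id := ⟨.id _, mapsTo_id _⟩
  refine le_csInf ⟨_, id, id, hid, hid, rfl⟩ ?_
  rintro _ ⟨σ₁, σ₂, h₁, h₂, rfl⟩
  exact h σ₁ σ₂ h₁ h₂

end UnitInterval

section Cells

open ProbabilityTheory

theorem abs_average_le_of_forall_abs_le {α : Type*} [MeasurableSpace α] {μ : Measure α}
    [IsFiniteMeasure μ] {f : α → ℝ} {c : ℝ} (hc : 0 ≤ c) (hf : ∀ x, |f x| ≤ c) :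
    |⨍ x, f x ∂μ| ≤ c := by
  have hle := norm_integral_le_of_norm_le_const (f := f) (ae_of_all μ hf)
  rw [average_eq, smul_eq_mul, abs_mul, abs_inv, abs_of_nonneg measureReal_nonneg]
  exact inv_mul_le_of_le_mul₀ measureReal_nonneg hc (by rwa [mul_comm])

variable {n : ℕ}

/-- The average of `W` over the cell `(i / n, (i + 1) / n] × (j / n, (j + 1) / n]`, `z = (i, j)`. -/
def cellAverage (W : ℝ → ℝ → ℝ) (z : Fin n × Fin n) : ℝ :=
  ⨍ p in Ioc ((z.1 : ℝ) / n) ((z.1 + 1) / n) ×ˢ Ioc ((z.2 : ℝ) / n) ((z.2 + 1) / n), W p.1 p.2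

theorem abs_cellAverage_le_one {W : ℝ → ℝ → ℝ} (hW : ∀ x y, W x y ∈ Icc (0 : ℝ) 1)
    (z : Fin n × Fin n) : |cellAverage W z| ≤ 1 := by
  rw [cellAverage, Measure.volume_eq_prod, ← Measure.prod_restrict]
  exact abs_average_le_of_forall_abs_le zero_le_one fun p =>
    abs_le.2 ⟨by linarith [(hW p.1 p.2).1], (hW p.1 p.2).2⟩

variable (n) [NeZero n]

/-- The index `i` of the cell `(i / n, (i + 1) / n]` containing `x`; a junk value for
`x ∉ (0, 1]`. -/
def cellIndex (x : ℝ) : Fin n := Fin.ofNat n (⌈(n : ℝ) * x⌉₊ - 1)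

theorem measurable_cellIndex : Measurable (cellIndex n) :=
  (measurable_of_countable fun k : ℕ => Fin.ofNat n (k - 1)).comp
    (Nat.measurable_ceil.comp (measurable_const_mul _))

variable {n}

theorem ceil_mul_eq_iff_cellIndex_eq {x : ℝ} (hx : x ∈ Ioc (0 : ℝ) 1) (i : Fin n) :
    ⌈(n : ℝ) * x⌉ = ((i : ℕ) : ℤ) + 1 ↔ cellIndex n x = i := by
  have hn : (0 : ℝ) < n := Nat.cast_pos.2 (NeZero.pos n)
  have hpos : 0 < ⌈(n : ℝ) * x⌉₊ := Nat.ceil_pos.2 (mul_pos hn hx.1)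
  have hle : ⌈(n : ℝ) * x⌉₊ ≤ n := Nat.ceil_le.2 (mul_le_of_le_one_right hn.le hx.2)
  rw [← Int.natCast_ceil_eq_ceil (mul_pos hn hx.1).le, Fin.ext_iff, cellIndex, Fin.val_ofNat,
    Nat.mod_eq_of_lt (by lia)]
  lia

theorem mem_Ioc_div_iff_ceil_mul_eq (i : ℕ) (x : ℝ) :
    x ∈ Ioc ((i : ℝ) / n) ((i + 1) / n) ↔ ⌈(n : ℝ) * x⌉ = (i : ℤ) + 1 := by
  have hn : (0 : ℝ) < n := Nat.cast_pos.2 (NeZero.pos n)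
  rw [Int.ceil_eq_iff, mem_Ioc, div_lt_iff₀' hn, le_div_iff₀' hn]
  push_cast
  rw [add_sub_cancel_right]

theorem mem_Ioc_div_iff_cellIndex_eq {x : ℝ} (hx : x ∈ Ioc (0 : ℝ) 1) (i : Fin n) :
    x ∈ Ioc ((i : ℝ) / n) ((i + 1) / n) ↔ cellIndex n x = i :=
  (mem_Ioc_div_iff_ceil_mul_eq i x).trans (ceil_mul_eq_iff_cellIndex_eq hx i)

theorem Ioc_div_subset (i : Fin n) : Ioc ((i : ℝ) / n) ((i + 1) / n) ⊆ Ioc (0 : ℝ) 1 := by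
  refine Ioc_subset_Ioc (by positivity) ?_
  rw [div_le_one (Nat.cast_pos.2 (NeZero.pos n))]
  exact_mod_cast i.isLt

theorem measurePreserving_cellIndex :
    MeasurePreserving (cellIndex n) volIcc (uniformOn univ) := by
  classical
  refine ⟨measurable_cellIndex n, ?_⟩
  have := Measure.isProbabilityMeasure_map (μ := volIcc) (measurable_cellIndex n).aemeasurable
  refine Measure.ext_of_measureReal_singleton fun i => ?_
  have hcell : cellIndex n ⁻¹' {i} ∩ Ioc 0 1 = Ioc ((i : ℝ) / n) ((i + 1) / n) := by
    ext x
    exact ⟨fun h => (mem_Ioc_div_iff_cellIndex_eq h.2 i).2 h.1,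
      fun h => ⟨(mem_Ioc_div_iff_cellIndex_eq (Ioc_div_subset i h) i).1 h, Ioc_div_subset i h⟩⟩
  rw [map_measureReal_apply (measurable_cellIndex n) (measurableSet_singleton i),
    ← restrict_Ioc_eq_volIcc, measureReal_restrict_apply' measurableSet_Ioc, hcell,
    Real.volume_real_Ioc_of_le (by gcongr; simp), measureReal_def, uniformOn_univ]
  simp [add_div]

theorem ae_mem_Ioc_prod :
    ∀ᵐ z ∂volIcc.prod volIcc, z.1 ∈ Ioc (0 : ℝ) 1 ∧ z.2 ∈ Ioc (0 : ℝ) 1 := by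
  have h : ∀ᵐ x ∂volIcc, x ∈ Ioc (0 : ℝ) 1 := by
    rw [← restrict_Ioc_eq_volIcc]
    exact ae_restrict_mem measurableSet_Ioc
  exact (Measure.quasiMeasurePreserving_fst.ae h).and (Measure.quasiMeasurePreserving_snd.ae h)

open Classical in
/-- The adjacency matrix of `G`, as a kernel on its vertex set. -/
def adjKernel {V : Type*} (G : SimpleGraph V) (z : V × V) : ℝ :=
  if G.Adj z.1 z.2 then 1 else 0

theorem uncurry_graphonOfGraph_ae_eq (G : SimpleGraph (Fin n)) :
    Function.uncurry (graphonOfGraph G) =ᵐ[volIcc.prod volIcc]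
      adjKernel G ∘ Prod.map (cellIndex n) (cellIndex n) := by
  filter_upwards [ae_mem_Ioc_prod] with p ⟨hx, hy⟩
  simp only [Function.uncurry, graphonOfGraph, Function.comp, Prod.map, adjKernel]
  congr 1
  simp only [ceil_mul_eq_iff_cellIndex_eq hx, ceil_mul_eq_iff_cellIndex_eq hy, eq_iff_iff]
  exact ⟨fun ⟨_, _, h, hi, hj⟩ => hi ▸ hj ▸ h, fun h => ⟨_, _, h, rfl, rfl⟩⟩

theorem uncurry_barStep_ae_eq (W : ℝ → ℝ → ℝ) :
    Function.uncurry (barStep n W) =ᵐ[volIcc.prod volIcc]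
      cellAverage W ∘ Prod.map (cellIndex n) (cellIndex n) := by
  filter_upwards [ae_mem_Ioc_prod] with ⟨x, y⟩ ⟨hx, hy⟩
  simp only [Function.uncurry, barStep, condExpPart, mem_Ioc_div_iff_cellIndex_eq hx,
    mem_Ioc_div_iff_cellIndex_eq hy, ite_and, Finset.sum_ite_irrel, Finset.sum_const_zero,
    Finset.sum_ite_eq, Finset.mem_univ, if_true]
  rfl

end Cells

section Overlay

open ProbabilityTheory

theorem graphonOfGraph_mem_Icc {n : ℕ} (G : SimpleGraph (Fin n)) (x y : ℝ) :
    graphonOfGraph G x y ∈ Icc (0 : ℝ) 1 := by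
  rw [graphonOfGraph]
  split_ifs <;> simp

theorem abs_adjKernel_le_one {V : Type*} (G : SimpleGraph V) (z : V × V) :
    |adjKernel G z| ≤ 1 := by
  rw [adjKernel]
  split_ifs <;> simp

theorem integral_sq_le_one_of_abs_le_one {Ω : Type*} [MeasurableSpace Ω] {P : Measure Ω}
    [IsProbabilityMeasure P] {f : Ω → ℝ} (hf : ∀ z, |f z| ≤ 1) : ∫ z, f z ^ 2 ∂P ≤ 1 := by
  have hsq : ∀ z, ‖f z ^ 2‖ ≤ 1 := fun z => by
    rw [Real.norm_eq_abs, abs_pow]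
    exact pow_le_one₀ (abs_nonneg _) (hf z)
  simpa using (le_abs_self _).trans (norm_integral_le_of_norm_le_const (ae_of_all P hsq))

variable {n : ℕ} [NeZero n] {W : ℝ → ℝ → ℝ}

theorem integrable_uncurry_of_mem_Icc (hWm : Measurable (Function.uncurry W))
    (hW : ∀ x y, W x y ∈ Icc (0 : ℝ) 1) :
    Integrable (Function.uncurry W) (volIcc.prod volIcc) :=
  .of_bound hWm.aestronglyMeasurable 1 <| ae_of_all _ fun p => by
    rw [Real.norm_eq_abs, Function.uncurry, abs_of_nonneg (hW _ _).1]
    exact (hW _ _).2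

theorem integrable_uncurry_graphonOfGraph (G : SimpleGraph (Fin n)) :
    Integrable (Function.uncurry (graphonOfGraph G)) (volIcc.prod volIcc) :=
  ((measurePreserving_cellIndex.prod measurePreserving_cellIndex).integrable_comp_of_integrable
    .of_finite).congr (uncurry_graphonOfGraph_ae_eq G).symm

theorem integrable_uncurry_barStep :
    Integrable (Function.uncurry (barStep n W)) (volIcc.prod volIcc) :=
  ((measurePreserving_cellIndex.prod measurePreserving_cellIndex).integrable_comp_of_integrable
    .of_finite).congr (uncurry_barStep_ae_eq W).symm

theorem cutNormLE_dCut_barStep (hW : Integrable (Function.uncurry W) (volIcc.prod volIcc)) :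
    CutNormLE volIcc (Function.uncurry W - Function.uncurry (barStep n W))
      (dCut W (barStep n W)) :=
  cutNormLE_cutNorm (U := fun x y => W x y - barStep n W x y) (hW.sub integrable_uncurry_barStep)

theorem cutNormLE_map_cellIndex (G : SimpleGraph (Fin n))
    (hW : Integrable (Function.uncurry W) (volIcc.prod volIcc)) {σ₁ σ₂ : ℝ → ℝ}
    (h₁ : MeasurePreserving σ₁ volIcc volIcc) (h₂ : MeasurePreserving σ₂ volIcc volIcc) :
    CutNormLE (volIcc.map fun x => (cellIndex n (σ₁ x), cellIndex n (σ₂ x)))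
      (adjKernel G ∘ Prod.map Prod.fst Prod.fst -
        cellAverage W ∘ Prod.map Prod.snd Prod.snd)
      (cutNorm (fun x y => graphonOfGraph G (σ₁ x) (σ₁ y) - W (σ₂ x) (σ₂ y)) +
        dCut W (barStep n W)) := by
  have hm := ((measurable_cellIndex n).comp h₁.measurable).prodMk
    ((measurable_cellIndex n).comp h₂.measurable)
  refine .map hm .of_discrete ?_
  have hGσ := (h₁.prod h₁).integrable_comp_of_integrable (integrable_uncurry_graphonOfGraph G)
  have hWσ := (h₂.prod h₂).integrable_comp_of_integrable hW
  have hstep := (cutNormLE_dCut_barStep (n := n) hW).comp h₂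
    (hW.sub integrable_uncurry_barStep).aestronglyMeasurable
  have hdiff := cutNormLE_cutNorm
    (U := fun x y => graphonOfGraph G (σ₁ x) (σ₁ y) - W (σ₂ x) (σ₂ y)) (hGσ.sub hWσ)
  have hbarσ := (h₂.prod h₂).integrable_comp_of_integrable
    (hW.sub (integrable_uncurry_barStep (n := n) (W := W)))
  refine (hdiff.add hstep (hGσ.sub hWσ) hbarσ).congr_ae ?_
  filter_upwards [(h₁.prod h₁).quasiMeasurePreserving.ae_eq_comp (uncurry_graphonOfGraph_ae_eq G),
    (h₂.prod h₂).quasiMeasurePreserving.ae_eq_comp (uncurry_barStep_ae_eq (n := n) W)]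
    with p hG hbar
  calc _ = Function.uncurry (graphonOfGraph G) (Prod.map σ₁ σ₁ p) -
        Function.uncurry (barStep n W) (Prod.map σ₂ σ₂ p) := sub_add_sub_cancel _ _ _
    _ = _ := congrArg₂ _ hG hbar

theorem dCut_graphonOfGraph_comap_le {G : SimpleGraph (Fin n)} {π : Equiv.Perm (Fin n)} {c : ℝ}
    (hW : Integrable (Function.uncurry W) (volIcc.prod volIcc))
    (h : CutNormLE (uniformOn univ)
      (adjKernel G ∘ Prod.map π π - cellAverage W) c) :
    dCut (graphonOfGraph (G.comap π)) W ≤ c + dCut W (barStep n W) := by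
  refine cutNorm_le_of_cutNormLE ?_
  have hG := integrable_uncurry_graphonOfGraph (G.comap π)
  have hcell : CutNormLE volIcc (Function.uncurry (graphonOfGraph (G.comap π)) -
      Function.uncurry (barStep n W)) c := by
    refine (h.comp measurePreserving_cellIndex .of_discrete).congr_ae ?_
    filter_upwards [uncurry_graphonOfGraph_ae_eq (G.comap π), uncurry_barStep_ae_eq (n := n) W]
      with p hG hbar
    rw [Pi.sub_apply, hG, hbar]
    rfl
  convert hcell.sub (cutNormLE_dCut_barStep (n := n) hW) (hG.sub integrable_uncurry_barStep)
    (hW.sub integrable_uncurry_barStep) using 1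
  exact (sub_sub_sub_cancel_right _ _ _).symm

theorem exists_perm_dCut_le (G : SimpleGraph (Fin n)) (hWm : Measurable (Function.uncurry W))
    (hW : ∀ x y, W x y ∈ Icc (0 : ℝ) 1) {σ₁ σ₂ : ℝ → ℝ}
    (h₁ : MeasurePreserving σ₁ volIcc volIcc) (h₂ : MeasurePreserving σ₂ volIcc volIcc)
    {ε : ℝ} (hε : 0 < ε) {N : ℕ} (hN : 1 ≤ N * ε ^ 2) :
    ∃ π : Equiv.Perm (Fin n), dCut (graphonOfGraph (G.comap π)) W ≤
      cutNorm (fun x y => graphonOfGraph G (σ₁ x) (σ₁ y) - W (σ₂ x) (σ₂ y)) +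
        2 * dCut W (barStep n W) + (4 * ε + 4 * (N * ε) * (16 ^ N / n)) := by
  have hWi := integrable_uncurry_of_mem_Icc hWm hW
  have hm₁ := measurePreserving_cellIndex (n := n).comp h₁
  have hm₂ := measurePreserving_cellIndex (n := n).comp h₂
  have hm := hm₁.measurable.prodMk hm₂.measurable
  have := Measure.isProbabilityMeasure_map (μ := volIcc) hm.aemeasurable
  obtain ⟨π, hπ⟩ := exists_perm_cutNormLE
    ⟨measurable_fst, (Measure.map_map measurable_fst hm).trans hm₁.map_eq⟩
    ⟨measurable_snd, (Measure.map_map measurable_snd hm).trans hm₂.map_eq⟩ hε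
    ((integral_sq_le_one_of_abs_le_one (abs_adjKernel_le_one G)).trans hN)
    ((integral_sq_le_one_of_abs_le_one (abs_cellAverage_le_one hW)).trans hN)
    (cutNormLE_map_cellIndex G hWi h₁ h₂)
  refine ⟨π, (dCut_graphonOfGraph_comap_le hWi hπ).trans_eq ?_⟩
  rw [Fintype.card_fin]
  ring

end Overlay

section Parameters

theorem eight_mul_mul_sixteen_pow_le {n N : ℕ} (hn : 0 < n) (hN : 2 ≤ N)
    (hlog : 16 * (N - 1 : ℝ) ≤ Real.logb 2 n) : (8 * N * 16 ^ N : ℝ) ≤ n := by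
  have hnat : 8 * N * 16 ^ N ≤ 2 ^ (16 * (N - 1)) := calc
    8 * N * 16 ^ N ≤ 2 ^ 3 * 2 ^ N * (2 ^ 4) ^ N := by
      gcongr
      · norm_num
      · exact N.lt_two_pow_self.le
      · norm_num
    _ = 2 ^ (3 + N + 4 * N) := by rw [← pow_mul, ← pow_add, ← pow_add]
    _ ≤ _ := Nat.pow_le_pow_right two_pos (by lia)
  calc (8 * N * 16 ^ N : ℝ) ≤ (2 : ℝ) ^ (16 * (N - 1)) := by exact_mod_cast hnat
    _ = (2 : ℝ) ^ (16 * (N - 1 : ℝ)) := by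
      rw [← Real.rpow_natCast]
      push_cast [Nat.cast_sub (one_le_two.trans hN)]
      rfl
    _ ≤ (2 : ℝ) ^ Real.logb 2 n := Real.rpow_le_rpow_of_exponent_le one_le_two hlog
    _ = n := Real.rpow_logb two_pos (by norm_num) (Nat.cast_pos.2 hn)

theorem exists_regularity_parameters {n : ℕ} (hlog : 16 < Real.logb 2 n) :
    ∃ (ε : ℝ) (N : ℕ), 0 < ε ∧ 1 ≤ N * ε ^ 2 ∧
      4 * ε + 4 * (N * ε) * (16 ^ N / n) ≤ 18 / √(Real.logb 2 n) := by
  have hn : 0 < n := Nat.pos_of_ne_zero <| by rintro rfl; norm_num at hlog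
  set L := Real.logb 2 n
  have hL : 0 < L := by linarith
  have hceil : L / 16 ≤ ⌈L / 16⌉₊ := Nat.le_ceil _
  have hceil_lt : (⌈L / 16⌉₊ : ℝ) < L / 16 + 1 := Nat.ceil_lt_add_one (by positivity)
  have htwo : 2 ≤ ⌈L / 16⌉₊ := Nat.lt_ceil.2 (by norm_num; linarith)
  set N := ⌈L / 16⌉₊
  have hpow : 8 * N * 16 ^ N / (n : ℝ) ≤ 1 := div_le_one_of_le₀
    (eight_mul_mul_sixteen_pow_le hn htwo (by linarith)) n.cast_nonneg
  refine ⟨4 / √L, N, by positivity, ?_, ?_⟩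
  · rw [div_pow, Real.sq_sqrt hL.le, ← mul_div_assoc, one_le_div hL]
    linarith
  · calc 4 * (4 / √L) + 4 * (N * (4 / √L)) * (16 ^ N / n)
        = (16 + 2 * (8 * N * 16 ^ N / n)) / √L := by ring
      _ ≤ 18 / √L := by gcongr; linarith

end Parameters

theorem dCut_graphonOfGraph_le_of_logb_le {W : ℝ → ℝ → ℝ}
    (hW : ∀ x y, W x y ∈ Icc (0 : ℝ) 1) {n : ℕ} (hn : 2 ≤ n) (hlog : Real.logb 2 n ≤ 324)
    (G : SimpleGraph (Fin n)) :
    dCut (graphonOfGraph G) W ≤ 18 / √(Real.logb 2 n) := by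
  have hpos : 0 < Real.logb 2 n := Real.logb_pos one_lt_two (by exact_mod_cast hn)
  calc dCut (graphonOfGraph G) W ≤ 1 := cutNorm_le_of_abs_le zero_le_one fun x y =>
        Real.dist_le_of_mem_Icc_01 (graphonOfGraph_mem_Icc G x y) (hW x y)
    _ ≤ 18 / √(Real.logb 2 n) := by
      rw [one_le_div (Real.sqrt_pos.2 hpos), Real.sqrt_le_left (by norm_num)]
      linarith

theorem stmt3_general (W : ℝ → ℝ → ℝ) (hWm : Measurable (Function.uncurry W))
    (hW : ∀ x y, W x y ∈ Icc (0 : ℝ) 1) (n : ℕ) (hn : 2 ≤ n) (G : SimpleGraph (Fin n)) :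
    ∃ π : Equiv.Perm (Fin n),
      dCut (graphonOfGraph (G.comap ⇑π)) W ≤
        deltaCut (graphonOfGraph G) W + 2 * dCut W (barStep n W) +
          18 / Real.sqrt (Real.logb 2 (n : ℝ)) := by
  obtain ⟨π, hπ⟩ := Finite.exists_min
    fun π : Equiv.Perm (Fin n) => dCut (graphonOfGraph (G.comap π)) W
  refine ⟨π, ?_⟩
  obtain hlog | hlog := le_or_gt (Real.logb 2 n) 324
  · linarith [dCut_graphonOfGraph_le_of_logb_le hW hn hlog (G.comap π),
      dCut_nonneg W (barStep n W), deltaCut_nonneg (graphonOfGraph G) W]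
  · have : NeZero n := ⟨by lia⟩
    obtain ⟨ε, N, hε, hN, herror⟩ := exists_regularity_parameters (n := n) (by linarith)
    suffices h : dCut (graphonOfGraph (G.comap π)) W - 2 * dCut W (barStep n W) -
        18 / √(Real.logb 2 n) ≤ deltaCut (graphonOfGraph G) W by linarith
    refine le_deltaCut fun σ₁ σ₂ h₁ h₂ => ?_
    obtain ⟨ρ, hρ⟩ := exists_perm_dCut_le G hWm hW h₁.1 h₂.1 hε hN
    linarith [hπ ρ]

/-- Lemma 4.1: every graph `G` on `{1,…,n}` has a relabelling `G̃` with
`d_□(W_{G̃}, W) ≤ δ_□(G, W) + 2 d_□(W, W̄_n) + 18/√(log₂ n)`. -/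
theorem stmt3 (W : ℝ → ℝ → ℝ) (hW : IsGraphon W) (n : ℕ) (hn : 2 ≤ n)
    (G : SimpleGraph (Fin n)) :
    ∃ π : Equiv.Perm (Fin n),
      dCut (graphonOfGraph (G.comap ⇑π)) W ≤
        deltaCut (graphonOfGraph G) W + 2 * dCut W (barStep n W) +
          18 / Real.sqrt (Real.logb 2 (n : ℝ)) :=
  stmt3_general W hW.2.1 hW.2.2 n hn G

end
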